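/- arXiv:1804.10050 — 4 statements merged into one kernel-verified Lean document; each statement's English description precedes it below -/
import Mathlib

section
/- Let n ≥ 1 and let D_1,…,D_n be integers with D_i ≥ 3 for each i. Let H ⊆ ℤ_{D_1} × … × ℤ_{D_n} be a sunflower-free family. Then |H| ≤ 3·∑_{I ⊆ [n], 0 ≤ |I| ≤ 2n/3} ∏_{i∈I} (D_i − 1), where the sum is over all subsets I of {1,…,n} of size at most 2n/3 (and the empty product equals 1). -/
/-- Exactly two of `a`, `b`, `c` are equal. -/
def ExactlyTwoEq {β : Type*} (a b c : β) : Prop :=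
  (a = b ∧ a ≠ c) ∨ (a = c ∧ a ≠ b) ∨ (b = c ∧ a ≠ b)

/-- A family `H ⊆ ℤ_{D_1} × … × ℤ_{D_n}` is sunflower-free if for every three
distinct members there is a coordinate where exactly two of the entries agree. -/
def SunflowerFreePi (n : ℕ) (D : Fin n → ℕ) (H : Finset (∀ i, ZMod (D i))) : Prop :=
  ∀ x ∈ H, ∀ y ∈ H, ∀ z ∈ H, x ≠ y → y ≠ z → x ≠ z →
    ∃ i : Fin n, ExactlyTwoEq (x i) (y i) (z i)

open Finset in
/-- If `U` is a subspace of `ℚ^X` on which the trilinear form `∑ h u v` vanishes then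
`2 dim U ≤ |X|`. -/
lemma two_finrank_le {X : Type*} [Fintype X] [DecidableEq X] (U : Submodule ℚ (X → ℚ))
    (hU : ∀ h ∈ U, ∀ u ∈ U, ∀ v ∈ U, ∑ x, h x * u x * v x = 0) :
    2 * Module.finrank ℚ U ≤ Fintype.card X := by
  classical
  -- an element with support of maximal size
  obtain ⟨h, hh, hmax⟩ : ∃ h ∈ U, ∀ u ∈ U,
      (univ.filter (fun x => u x ≠ 0)).card ≤ (univ.filter (fun x => h x ≠ 0)).card := by
    let S : Set ℕ := {k | ∃ u ∈ U, (univ.filter (fun x => u x ≠ 0)).card = k}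
    have hS : S.Nonempty := ⟨_, 0, U.zero_mem, rfl⟩
    have hb : BddAbove S := ⟨Fintype.card X, by
      rintro k ⟨u, -, rfl⟩
      exact card_le_univ _⟩
    obtain ⟨h, hh, hk⟩ := Nat.sSup_mem hS hb
    exact ⟨h, hh, fun u hu => hk ▸ le_csSup hb ⟨u, hu, rfl⟩⟩
  have key : ∀ u ∈ U, (∀ x, h x * u x = 0) → u = 0 := by
    intro u hu hz
    by_contra hne
    obtain ⟨x0, hx0⟩ := Function.ne_iff.1 hne
    have h1 := hmax (h + u) (U.add_mem hh hu)
    have h2 : (univ.filter (fun x => h x ≠ 0)).card <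
        (univ.filter (fun x => (h + u) x ≠ 0)).card := by
      apply card_lt_card
      rw [Finset.ssubset_iff_of_subset]
      · refine ⟨x0, ?_, ?_⟩
        · have := hz x0
          have h3 : h x0 = 0 := by
            rcases mul_eq_zero.1 this with h | h
            · exact h
            · exact absurd h hx0
          simpa [h3] using hx0
        · have := hz x0
          have h3 : h x0 = 0 := by
            rcases mul_eq_zero.1 this with h | h
            · exact h
            · exact absurd h hx0
          simp [h3]
      · intro x hx
        simp only [mem_filter, mem_univ, true_and] at hx ⊢
        have h3 : u x = 0 := by
          rcases mul_eq_zero.1 (hz x) with h | h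
          · exact absurd h hx
          · exact h
        simpa [h3] using hx
    omega
  let L : (X → ℚ) →ₗ[ℚ] (X → ℚ) := LinearMap.mulLeft ℚ h
  have hinj : Function.Injective (L.comp U.subtype) := by
    rw [← LinearMap.ker_eq_bot, LinearMap.ker_eq_bot']
    intro u hu
    apply Subtype.ext
    exact key u u.2 (fun x => congrFun hu x)
  have hW : Module.finrank ℚ (LinearMap.range (L.comp U.subtype)) = Module.finrank ℚ U :=
    LinearMap.finrank_range_of_inj hinj
  have hdis : Disjoint U (LinearMap.range (L.comp U.subtype)) := by
    rw [Submodule.disjoint_def]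
    rintro w hw ⟨u, rfl⟩
    have h0 := hU h hh u u.2 _ hw
    have h1 : ∑ x, (L.comp U.subtype u) x * (L.comp U.subtype u) x = 0 := h0
    rw [Finset.sum_eq_zero_iff_of_nonneg (fun x _ => mul_self_nonneg _)] at h1
    funext x
    exact mul_self_eq_zero.1 (h1 x (mem_univ x))
  have := Submodule.finrank_add_finrank_le_of_disjoint hdis
  rw [hW, Module.finrank_fintype_fun_eq_card] at this
  omega

/-- Orthogonality to the restricted monomials implies orthogonality to all of them. -/
lemma orth_all {n : ℕ} {D : Fin n → ℕ} [∀ i, NeZero (D i)] {H : Finset (∀ i, ZMod (D i))}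
    (u : H → ℚ)
    (hu : ∀ I : Finset (Fin n), 3 * I.card ≤ 2 * n → ∀ a : ∀ i, ZMod (D i),
      (∀ i ∈ I, a i ≠ 0) → ∑ x : H, u x * ∏ i ∈ I, (if x.1 i = a i then (1 : ℚ) else 0) = 0) :
    ∀ (k : ℕ) (I : Finset (Fin n)), 3 * I.card ≤ 2 * n → ∀ a : ∀ i, ZMod (D i),
      (I.filter (fun i => a i = 0)).card = k →
      ∑ x : H, u x * ∏ i ∈ I, (if x.1 i = a i then (1 : ℚ) else 0) = 0 := by
  classical
  intro k
  induction k with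
  | zero =>
    intro I hI a ha
    apply hu I hI a
    intro i hi h0
    rw [Finset.card_eq_zero, Finset.filter_eq_empty_iff] at ha
    exact ha hi h0
  | succ k ih =>
    intro I hI a ha
    obtain ⟨j, hj⟩ : (I.filter (fun i => a i = 0)).Nonempty := by
      rw [← Finset.card_pos]; omega
    have hj' := Finset.mem_filter.1 hj
    have hE : ((I.erase j).filter (fun i => a i = 0)).card = k := by
      rw [Finset.filter_erase, Finset.card_erase_of_mem hj, ha]; rfl
    have h1 := ih (I.erase j) (by have := Finset.card_erase_le (s := I) (a := j); omega) a hE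
    have h2 : ∀ b ∈ (Finset.univ : Finset (ZMod (D j))).erase 0,
        ∑ x : H, u x * ∏ i ∈ I, (if x.1 i = Function.update a j b i then (1 : ℚ) else 0) = 0 := by
      intro b hb
      apply ih I hI
      rw [← hE]
      congr 1
      ext i
      by_cases hij : i = j
      · subst hij
        simp [Finset.ne_of_mem_erase hb]
      · simp [hij]
    have h3 : ∀ x : H, u x * ∏ i ∈ I, (if x.1 i = a i then (1 : ℚ) else 0) =
        u x * ∏ i ∈ I.erase j, (if x.1 i = a i then (1 : ℚ) else 0) -
        ∑ b ∈ (Finset.univ : Finset (ZMod (D j))).erase 0,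
          u x * ∏ i ∈ I, (if x.1 i = Function.update a j b i then (1 : ℚ) else 0) := by
      intro x
      have e : ∀ b, ∏ i ∈ I, (if x.1 i = Function.update a j b i then (1 : ℚ) else 0) =
          (if x.1 j = b then 1 else 0) *
            ∏ i ∈ I.erase j, (if x.1 i = a i then (1 : ℚ) else 0) := by
        intro b
        rw [← Finset.mul_prod_erase I _ hj'.1, Function.update_self]
        congr 1
        apply Finset.prod_congr rfl
        intro i hi
        rw [Function.update_of_ne (Finset.ne_of_mem_erase hi)]
      have e0 : ∏ i ∈ I, (if x.1 i = a i then (1 : ℚ) else 0) =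
          (if x.1 j = 0 then 1 else 0) *
            ∏ i ∈ I.erase j, (if x.1 i = a i then (1 : ℚ) else 0) := by
        rw [← e 0, ← hj'.2, Function.update_eq_self]
      have es : (∑ b ∈ (Finset.univ : Finset (ZMod (D j))).erase 0,
          (if x.1 j = b then (1 : ℚ) else 0)) = 1 - (if x.1 j = 0 then 1 else 0) := by
        rw [eq_sub_iff_add_eq,
          Finset.sum_erase_add _ (fun b => if x.1 j = b then (1 : ℚ) else 0) (Finset.mem_univ 0)]
        simp
      rw [e0]
      simp_rw [e]
      rw [← Finset.mul_sum, ← Finset.sum_mul, es]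
      ring
    rw [Finset.sum_congr rfl (fun x _ => h3 x), Finset.sum_sub_distrib, h1, Finset.sum_comm,
      Finset.sum_eq_zero h2, sub_zero]

/-- One of the four summands of the coordinate function. -/
def sfTerm {β : Type*} [DecidableEq β] (t : Fin 4) (a b c : β) : ℚ :=
  if t = 0 then (if a = b then 1 else 0)
  else if t = 1 then (if b = c then 1 else 0)
  else if t = 2 then (if a = c then 1 else 0)
  else -1

lemma sum_sfTerm {β : Type*} [DecidableEq β] (a b c : β) : ∑ t, sfTerm t a b c =
    (if a = b then 1 else 0) + (if b = c then 1 else 0) + (if a = c then 1 else 0) - 1 := by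
  simp [Fin.sum_univ_four, sfTerm]
  ring

lemma card_choice {n : ℕ} (t : Fin n → Fin 4) :
    (Finset.univ.filter (fun i => t i = 0 ∨ t i = 2)).card +
    (Finset.univ.filter (fun i => t i = 0 ∨ t i = 1)).card +
    (Finset.univ.filter (fun i => t i = 1 ∨ t i = 2)).card ≤ 2 * n := by
  simp only [Finset.card_filter]
  rw [← Finset.sum_add_distrib, ← Finset.sum_add_distrib]
  calc _ ≤ ∑ i : Fin n, 2 := by
        apply Finset.sum_le_sum
        intro i _
        generalize t i = s
        revert s
        decide
    _ = 2 * n := by simp [mul_comm]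

lemma sf_split {n : ℕ} (F G K : Fin n → ℚ) (p : Fin n → Prop) [DecidablePred p]
    (h : ∀ i, F i = (if p i then G i else K i)) :
    ∏ i, F i = (∏ i ∈ Finset.univ.filter (fun i => ¬ p i), K i) *
      ∏ i ∈ Finset.univ.filter p, G i := by
  rw [Finset.prod_congr rfl (fun i _ => h i), Finset.prod_ite, mul_comm]

lemma trilinear_zero {n : ℕ} {D : Fin n → ℕ} {H : Finset (∀ i, ZMod (D i))}
    (h u v : H → ℚ)
    (hh : ∀ I : Finset (Fin n), 3 * I.card ≤ 2 * n → ∀ a : ∀ i, ZMod (D i),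
      ∑ x : H, h x * ∏ i ∈ I, (if x.1 i = a i then (1 : ℚ) else 0) = 0)
    (hu : ∀ I : Finset (Fin n), 3 * I.card ≤ 2 * n → ∀ a : ∀ i, ZMod (D i),
      ∑ x : H, u x * ∏ i ∈ I, (if x.1 i = a i then (1 : ℚ) else 0) = 0)
    (hv : ∀ I : Finset (Fin n), 3 * I.card ≤ 2 * n → ∀ a : ∀ i, ZMod (D i),
      ∑ x : H, v x * ∏ i ∈ I, (if x.1 i = a i then (1 : ℚ) else 0) = 0)
    (t : Fin n → Fin 4) :
    ∑ x : H, ∑ y : H, ∑ z : H, h x * u y * v z * ∏ i, sfTerm (t i) (x.1 i) (y.1 i) (z.1 i)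
      = 0 := by
  have hc := card_choice t
  by_cases c1 : 3 * (Finset.univ.filter (fun i => t i = 0 ∨ t i = 2)).card ≤ 2 * n
  · rw [Finset.sum_comm]
    refine Finset.sum_eq_zero fun y _ => ?_
    rw [Finset.sum_comm]
    refine Finset.sum_eq_zero fun z _ => ?_
    have := hh _ c1 (fun i => if t i = 0 then y.1 i else z.1 i)
    rw [← mul_zero (u y * v z * ∏ i ∈ Finset.univ.filter (fun i => ¬ (t i = 0 ∨ t i = 2)),
      sfTerm (t i) (y.1 i) (y.1 i) (z.1 i)), ← this, Finset.mul_sum]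
    refine Finset.sum_congr rfl fun x _ => ?_
    rw [sf_split _ (fun i => if x.1 i = (if t i = 0 then y.1 i else z.1 i) then (1 : ℚ) else 0)
      (fun i => sfTerm (t i) (y.1 i) (y.1 i) (z.1 i)) (fun i => t i = 0 ∨ t i = 2)]
    · ring
    · intro i
      generalize t i = s
      fin_cases s <;> simp [sfTerm]
  by_cases c2 : 3 * (Finset.univ.filter (fun i => t i = 0 ∨ t i = 1)).card ≤ 2 * n
  · refine Finset.sum_eq_zero fun x _ => ?_
    rw [Finset.sum_comm]
    refine Finset.sum_eq_zero fun z _ => ?_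
    have := hu _ c2 (fun i => if t i = 0 then x.1 i else z.1 i)
    rw [← mul_zero (h x * v z * ∏ i ∈ Finset.univ.filter (fun i => ¬ (t i = 0 ∨ t i = 1)),
      sfTerm (t i) (x.1 i) (x.1 i) (z.1 i)), ← this, Finset.mul_sum]
    refine Finset.sum_congr rfl fun y _ => ?_
    rw [sf_split _ (fun i => if y.1 i = (if t i = 0 then x.1 i else z.1 i) then (1 : ℚ) else 0)
      (fun i => sfTerm (t i) (x.1 i) (x.1 i) (z.1 i)) (fun i => t i = 0 ∨ t i = 1)]
    · ring
    · intro i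
      generalize t i = s
      fin_cases s <;> simp [sfTerm, eq_comm]
  have c3 : 3 * (Finset.univ.filter (fun i => t i = 1 ∨ t i = 2)).card ≤ 2 * n := by omega
  refine Finset.sum_eq_zero fun x _ => ?_
  refine Finset.sum_eq_zero fun y _ => ?_
  have := hv _ c3 (fun i => if t i = 1 then y.1 i else x.1 i)
  rw [← mul_zero (h x * u y * ∏ i ∈ Finset.univ.filter (fun i => ¬ (t i = 1 ∨ t i = 2)),
    sfTerm (t i) (x.1 i) (y.1 i) (x.1 i)), ← this, Finset.mul_sum]
  refine Finset.sum_congr rfl fun z _ => ?_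
  rw [sf_split _ (fun i => if z.1 i = (if t i = 1 then y.1 i else x.1 i) then (1 : ℚ) else 0)
    (fun i => sfTerm (t i) (x.1 i) (y.1 i) (x.1 i)) (fun i => t i = 1 ∨ t i = 2)]
  · ring
  · intro i
    generalize t i = s
    fin_cases s <;> simp [sfTerm, eq_comm]

lemma tensor_diag {n : ℕ} {D : Fin n → ℕ} {H : Finset (∀ i, ZMod (D i))}
    (hH : SunflowerFreePi n D H) (x y z : H) :
    ∏ i, (∑ t, sfTerm t (x.1 i) (y.1 i) (z.1 i)) =
      if y = x then (if z = x then (2 : ℚ) ^ n else 0) else 0 := by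
  simp_rw [sum_sfTerm]
  by_cases hxy : y = x
  · subst hxy
    by_cases hxz : z = y
    · subst hxz
      norm_num
    · rw [if_pos rfl, if_neg hxz]
      obtain ⟨i, hi⟩ := Function.ne_iff.1 (fun e => hxz (Subtype.ext e))
      apply Finset.prod_eq_zero (Finset.mem_univ i)
      simp [Ne.symm hi]
  · rw [if_neg hxy]
    have hyx : x.1 ≠ y.1 := fun e => hxy (Subtype.ext e.symm)
    obtain ⟨i, hi⟩ := Function.ne_iff.1 hyx
    by_cases hxz : x.1 = z.1
    · apply Finset.prod_eq_zero (Finset.mem_univ i)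
      rw [← hxz]
      simp [hi, Ne.symm hi]
    by_cases hyz : y.1 = z.1
    · apply Finset.prod_eq_zero (Finset.mem_univ i)
      rw [← hyz]
      simp [hi]
    obtain ⟨j, hj⟩ := hH x x.2 y y.2 z z.2 hyx hyz hxz
    apply Finset.prod_eq_zero (Finset.mem_univ j)
    rcases hj with ⟨h1, h2⟩ | ⟨h1, h2⟩ | ⟨h1, h2⟩
    · rw [← h1]; simp [h2]
    · rw [← h1]; simp [h2, Ne.symm h2]
    · rw [← h1]; simp [h2]

theorem sunflowerFree_pi_bound (n : ℕ) (hn : 1 ≤ n) (D : Fin n → ℕ)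
    (hD : ∀ i, 3 ≤ D i) (H : Finset (∀ i, ZMod (D i)))
    (hH : SunflowerFreePi n D H) :
    H.card ≤ 3 * ∑ I ∈ Finset.univ.powerset.filter
        (fun I : Finset (Fin n) => 3 * I.card ≤ 2 * n),
      ∏ i ∈ I, (D i - 1) := by
  classical
  have : ∀ i, NeZero (D i) := fun i => ⟨by have := hD i; omega⟩
  set P := Finset.univ.powerset.filter (fun I : Finset (Fin n) => 3 * I.card ≤ 2 * n) with hP
  let J := Σ I : P, ∀ i : I.1, {a : ZMod (D i) // a ≠ 0}
  have hJ : Fintype.card J = ∑ I ∈ P, ∏ i ∈ I, (D i - 1) := by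
    rw [Fintype.card_sigma, ← Finset.sum_coe_sort P]
    refine Finset.sum_congr rfl fun I _ => ?_
    rw [Fintype.card_pi, ← Finset.prod_coe_sort I.1]
    refine Finset.prod_congr rfl fun i _ => ?_
    rw [Fintype.card_subtype_compl, ZMod.card, Fintype.card_subtype_eq]
  let A : Matrix J H ℚ := fun j x => ∏ i : j.1.1, (if x.1 i = (j.2 i).1 then (1 : ℚ) else 0)
  let U := LinearMap.ker A.mulVecLin
  have hUmem : ∀ u ∈ U, ∀ I : Finset (Fin n), 3 * I.card ≤ 2 * n → ∀ a : ∀ i, ZMod (D i),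
      ∑ x : H, u x * ∏ i ∈ I, (if x.1 i = a i then (1 : ℚ) else 0) = 0 := by
    intro u hu I hI a
    refine orth_all u ?_ _ I hI a rfl
    clear a
    intro I hI a ha
    have h1 : A.mulVecLin u = 0 := hu
    have h2 := congrFun h1 (⟨⟨I, by simp [hP, hI]⟩, fun i => ⟨a i, ha i i.2⟩⟩ : J)
    rw [Pi.zero_apply, Matrix.mulVecLin_apply] at h2
    refine Eq.trans ?_ h2
    refine Finset.sum_congr rfl fun x _ => ?_
    rw [mul_comm]
    congr 1
    exact (Finset.prod_coe_sort I (fun i => if x.1 i = a i then (1 : ℚ) else 0)).symm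
  have h2U := two_finrank_le U (by
    intro h hh u hu v hv
    have hz : ∑ x : H, ∑ y : H, ∑ z : H, h x * u y * v z *
        ∏ i, (∑ t, sfTerm t (x.1 i) (y.1 i) (z.1 i)) = 0 := by
      simp_rw [Finset.prod_univ_sum, Finset.mul_sum]
      have e1 : ∀ x y : H, ∑ z : H, ∑ t ∈ Fintype.piFinset (fun _ : Fin n => Finset.univ),
          h x * u y * v z * ∏ i, sfTerm (t i) (x.1 i) (y.1 i) (z.1 i) =
          ∑ t ∈ Fintype.piFinset (fun _ : Fin n => (Finset.univ : Finset (Fin 4))), ∑ z : H,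
          h x * u y * v z * ∏ i, sfTerm (t i) (x.1 i) (y.1 i) (z.1 i) :=
        fun x y => Finset.sum_comm
      simp_rw [e1]
      have e2 : ∀ x : H, ∑ y : H, ∑ t ∈ Fintype.piFinset (fun _ : Fin n => Finset.univ),
          ∑ z : H, h x * u y * v z * ∏ i, sfTerm (t i) (x.1 i) (y.1 i) (z.1 i) =
          ∑ t ∈ Fintype.piFinset (fun _ : Fin n => (Finset.univ : Finset (Fin 4))),
          ∑ y : H, ∑ z : H,
          h x * u y * v z * ∏ i, sfTerm (t i) (x.1 i) (y.1 i) (z.1 i) :=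
        fun x => Finset.sum_comm
      simp_rw [e2]
      rw [Finset.sum_comm]
      exact Finset.sum_eq_zero fun t _ =>
        trilinear_zero h u v (hUmem h hh) (hUmem u hu) (hUmem v hv) t
    simp_rw [tensor_diag hH] at hz
    simp only [mul_ite, mul_zero, Finset.sum_ite_irrel, Finset.sum_ite_eq', Finset.mem_univ,
      if_true, Finset.sum_const_zero] at hz
    rw [← Finset.sum_mul] at hz
    exact (mul_eq_zero.1 hz).resolve_right (by positivity))
  have hrn := LinearMap.finrank_range_add_finrank_ker A.mulVecLin
  have hr : Module.finrank ℚ (LinearMap.range A.mulVecLin) ≤ Fintype.card J :=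
    A.rank_le_card_height
  rw [Module.finrank_fintype_fun_eq_card] at hrn
  rw [Fintype.card_coe] at hrn h2U
  rw [← hJ]
  change _ + Module.finrank ℚ U = _ at hrn
  omega
end

section
/- Let F be a family of subsets of {1,…,n} that contains no sunflower with 3 petals. Then |F| ≤ 3·(n+1)·∑_{i=0}^{⌊n/3⌋} C(n, i), where C(n, i) is the binomial coefficient. -/
/-- Three (distinct) sets form a sunflower with 3 petals. -/
def IsThreeSunflower {α : Type*} [DecidableEq α] (A B C : Finset α) : Prop :=
  A ∩ B = A ∩ B ∩ C ∧ A ∩ C = A ∩ B ∩ C ∧ B ∩ C = A ∩ B ∩ C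

/-- A family of sets is sunflower-free if no three distinct members form a
sunflower with 3 petals. -/
def SunflowerFree {α : Type*} [DecidableEq α] (F : Finset (Finset α)) : Prop :=
  ¬ ∃ A ∈ F, ∃ B ∈ F, ∃ C ∈ F, A ≠ B ∧ A ≠ C ∧ B ≠ C ∧ IsThreeSunflower A B C

open Finset in
lemma exists_large_support {S : Type*} [Fintype S] [DecidableEq S] (V : Submodule ℚ (S → ℚ)) :
    ∃ h ∈ V, Module.finrank ℚ V ≤ (univ.filter (fun x => h x ≠ 0)).card := by
  classical
  have hne : ({k : ℕ | ∃ h ∈ V, (univ.filter (fun x => h x ≠ 0)).card = k}).Nonempty :=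
    ⟨_, 0, V.zero_mem, rfl⟩
  have hbd : BddAbove {k : ℕ | ∃ h ∈ V, (univ.filter (fun x => h x ≠ 0)).card = k} := by
    refine ⟨Fintype.card S, ?_⟩
    rintro k ⟨h, -, rfl⟩
    exact card_le_univ _
  obtain ⟨h, hV, hk⟩ := Nat.sSup_mem hne hbd
  refine ⟨h, hV, ?_⟩
  by_contra! hlt
  let D := {x : S // h x ≠ 0}
  let L : V →ₗ[ℚ] (D → ℚ) := (LinearMap.funLeft ℚ ℚ (Subtype.val : D → S)).comp V.subtype
  have hL : Module.finrank ℚ (D → ℚ) < Module.finrank ℚ V := by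
    rw [Module.finrank_fintype_fun_eq_card, Fintype.card_subtype]
    exact hlt
  have hker := LinearMap.ker_ne_bot_of_finrank_lt (f := L) hL
  obtain ⟨u, hu, hu0⟩ := (Submodule.ne_bot_iff _).1 hker
  have hu' : ∀ x, h x ≠ 0 → (u : S → ℚ) x = 0 := fun x hx =>
    congrFun (LinearMap.mem_ker.1 hu) ⟨x, hx⟩
  obtain ⟨x0, hx0⟩ : ∃ x, (u : S → ℚ) x ≠ 0 := by
    by_contra! hc
    exact hu0 (Subtype.ext (funext hc))
  have hle := le_csSup hbd ⟨h + u, V.add_mem hV u.2, rfl⟩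
  rw [← hk] at hle
  refine absurd hle (not_le.2 (card_lt_card ?_))
  rw [ssubset_iff_of_subset]
  · refine ⟨x0, ?_, ?_⟩
    · have : h x0 = 0 := by
        by_contra hc
        exact hx0 (hu' _ hc)
      simp [this, hx0]
    · simp only [mem_filter, mem_univ, true_and]
      intro hc
      exact hx0 (hu' _ hc)
  · intro x hx
    simp only [mem_filter, mem_univ, true_and] at hx ⊢
    simp [hu' x hx, hx]

open Finset in
lemma slice_rank_diag {S ι : Type*} [Fintype S] [DecidableEq S] [Fintype ι]
    (f1 f2 f3 : ι → S → ℚ) (g1 g2 g3 : ι → S → S → ℚ) (d : S → ℚ) (hd : ∀ x, d x ≠ 0)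
    (H : ∀ x y z, (∑ a, f1 a x * g1 a y z) + (∑ a, f2 a y * g2 a x z)
      + (∑ a, f3 a z * g3 a x y) = if x = z ∧ y = z then d z else 0) :
    Fintype.card S ≤ 3 * Fintype.card ι := by
  classical
  by_contra! hlt
  let L : (S → ℚ) →ₗ[ℚ] (ι → ℚ) := Matrix.mulVecLin (Matrix.of f1)
  obtain ⟨h, hV, hcard⟩ := exists_large_support (LinearMap.ker L)
  have hh : ∀ a, ∑ x, f1 a x * h x = 0 := fun a => congrFun (LinearMap.mem_ker.1 hV) a
  have hrn := LinearMap.finrank_range_add_finrank_ker L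
  have hr := Submodule.finrank_le (LinearMap.range L)
  rw [Module.finrank_fintype_fun_eq_card] at hrn hr
  let D := {x : S // h x ≠ 0}
  let M : (D → ℚ) →ₗ[ℚ] (ι ⊕ ι → ℚ) := Matrix.mulVecLin (Matrix.of
    (Sum.elim (fun a (y : D) => f2 a y) (fun a (y : D) => ∑ x, h x * g3 a x y)))
  have hM : Module.finrank ℚ (ι ⊕ ι → ℚ) < Module.finrank ℚ (D → ℚ) := by
    rw [Module.finrank_fintype_fun_eq_card, Module.finrank_fintype_fun_eq_card,
      Fintype.card_subtype, Fintype.card_sum]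
    omega
  obtain ⟨w, hw, hw0⟩ := (Submodule.ne_bot_iff _).1 (LinearMap.ker_ne_bot_of_finrank_lt (f := M) hM)
  have hw2 : ∀ a, ∑ y : D, f2 a y * w y = 0 := fun a =>
    congrFun (LinearMap.mem_ker.1 hw) (Sum.inl a)
  have hw3 : ∀ a, ∑ y : D, (∑ x, h x * g3 a x y) * w y = 0 := fun a =>
    congrFun (LinearMap.mem_ker.1 hw) (Sum.inr a)
  apply hw0
  funext z
  have key : ∑ y : D, ∑ x, h x * w y * (if x = (z : S) ∧ (y : S) = z then d z else 0)
      = h z * w z * d z := by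
    rw [Finset.sum_eq_single z, Finset.sum_eq_single (z : S)]
    · simp
    · intro x _ hx
      simp [hx]
    · simp
    · intro y _ hy
      have : (y : S) ≠ z := fun hc => hy (Subtype.ext hc)
      simp [this]
    · simp
  have k1 : ∑ y : D, ∑ x, h x * w y * (∑ a, f1 a x * g1 a y z) = 0 := by
    refine Finset.sum_eq_zero fun y _ => ?_
    simp_rw [Finset.mul_sum]
    rw [Finset.sum_comm]
    refine Finset.sum_eq_zero fun a _ => ?_
    calc _ = (∑ x, f1 a x * h x) * (w y * g1 a y z) := by
          rw [Finset.sum_mul]; exact Finset.sum_congr rfl fun x _ => by ring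
      _ = 0 := by rw [hh, zero_mul]
  have k2 : ∑ y : D, ∑ x, h x * w y * (∑ a, f2 a y * g2 a x z) = 0 := by
    rw [Finset.sum_comm]
    refine Finset.sum_eq_zero fun x _ => ?_
    simp_rw [Finset.mul_sum]
    rw [Finset.sum_comm]
    refine Finset.sum_eq_zero fun a _ => ?_
    calc _ = (∑ y : D, f2 a y * w y) * (h x * g2 a x z) := by
          rw [Finset.sum_mul]; exact Finset.sum_congr rfl fun x _ => by ring
      _ = 0 := by rw [hw2, zero_mul]
  have k3 : ∑ y : D, ∑ x, h x * w y * (∑ a, f3 a z * g3 a x y) = 0 := by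
    calc _ = ∑ y : D, ∑ a, f3 a z * ((∑ x, h x * g3 a x y) * w y) := by
          refine Finset.sum_congr rfl fun y _ => ?_
          simp_rw [Finset.mul_sum]
          rw [Finset.sum_comm]
          refine Finset.sum_congr rfl fun a _ => ?_
          rw [Finset.sum_mul, Finset.mul_sum]
          exact Finset.sum_congr rfl fun x _ => by ring
      _ = 0 := by
          rw [Finset.sum_comm]
          refine Finset.sum_eq_zero fun a _ => ?_
          rw [← Finset.mul_sum, hw3, mul_zero]
  simp_rw [← H, mul_add, Finset.sum_add_distrib] at key
  rw [k1, k2, k3] at key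
  have hz : h z ≠ 0 := z.2
  have := hd (z : S)
  simp only [Pi.zero_apply]
  by_contra hc
  exact (mul_ne_zero (mul_ne_zero hz hc) this) (by linarith)

/-- Grouping of the terms of an expanded product by a monomial of small degree. -/
lemma group_terms {Φ P : Type*} [Fintype P] [DecidableEq P]
    (s : Finset Φ) (p : Φ → Finset P) (k : ℕ) (hs : ∀ φ ∈ s, (p φ).card ≤ k)
    (F : Finset P → ℚ) (G : Φ → ℚ) :
    ∑ φ ∈ s, F (p φ) * G φ =
      ∑ a : {A : Finset P // A.card ≤ k}, F a * ∑ φ ∈ s with p φ = a, G φ := by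
  rw [← Finset.sum_subtype (Finset.univ.filter fun A : Finset P => A.card ≤ k) (by simp)
    (fun a => F a * ∑ φ ∈ s with p φ = a, G φ)]
  rw [← Finset.sum_fiberwise_of_maps_to (t := Finset.univ.filter fun A : Finset P => A.card ≤ k)
    (g := p) (by simpa using hs)]
  refine Finset.sum_congr rfl fun A _ => ?_
  rw [Finset.mul_sum]
  refine Finset.sum_congr rfl fun φ hφ => ?_
  rw [(Finset.mem_filter.1 hφ).2]

open Finset in
lemma layer_bound (n : ℕ) (F : Finset (Finset (Fin n))) (hF : SunflowerFree F) (l : ℕ)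
    (hl : ∀ A ∈ F, A.card = l) :
    F.card ≤ 3 * ∑ i ∈ Finset.range (n / 3 + 1), n.choose i := by
  classical
  have hcard : Fintype.card {A : Finset (Fin n) // A.card ≤ n / 3}
      = ∑ i ∈ Finset.range (n / 3 + 1), n.choose i := by
    rw [Fintype.card_subtype, Finset.card_eq_sum_card_fiberwise (f := Finset.card)
      (t := Finset.range (n / 3 + 1))]
    · refine Finset.sum_congr rfl fun i hi => ?_
      rw [Finset.filter_filter]
      rw [show n.choose i = (powersetCard i (univ : Finset (Fin n))).card by simp]
      congr 1
      ext A
      simp only [mem_range] at hi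
      simp only [mem_filter, mem_univ, true_and, mem_powersetCard, subset_univ]
      omega
    · intro A hA
      simp at hA ⊢
      omega
  rw [← hcard, ← Fintype.card_coe F]
  let v : Finset (Fin n) → Fin n → ℚ := fun A i => if i ∈ A then -1 else 0
  let e : F → F → F → Fin n → Fin 4 → ℚ := fun x y z i => ![2, v x i, v y i, v z i]
  let m : Finset (Fin n) → F → ℚ := fun A x => ∏ i ∈ A, v x i
  let p : Fin 4 → (Fin n → Fin 4) → Finset (Fin n) := fun j φ => univ.filter fun i => φ i = j
  have hterm : ∀ x y z φ, ∏ i, e x y z i (φ i)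
      = 2 ^ (p 0 φ).card * m (p 1 φ) x * m (p 2 φ) y * m (p 3 φ) z := by
    intro x y z φ
    rw [← Finset.prod_fiberwise (s := univ) (g := φ), Fin.prod_univ_four]
    congr 1
    · congr 1
      · congr 1
        · rw [Finset.prod_congr rfl (g := fun _ => (2 : ℚ)), Finset.prod_const]
          intro i hi
          rw [(mem_filter.1 hi).2]; rfl
        · refine Finset.prod_congr rfl fun i hi => ?_
          rw [(mem_filter.1 hi).2]; rfl
      · refine Finset.prod_congr rfl fun i hi => ?_
        rw [(mem_filter.1 hi).2]; rfl
    · refine Finset.prod_congr rfl fun i hi => ?_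
      rw [(mem_filter.1 hi).2]; rfl
  have hsum : ∀ φ, (p 0 φ).card + (p 1 φ).card + (p 2 φ).card + (p 3 φ).card = n := by
    intro φ
    have := Finset.card_eq_sum_card_fiberwise (s := univ) (t := univ) (f := φ) (by simp)
    rw [Fin.sum_univ_four] at this
    simpa using this.symm
  let s1 : Finset (Fin n → Fin 4) := univ.filter fun φ => (p 1 φ).card ≤ n / 3
  let s2 : Finset (Fin n → Fin 4) := univ.filter fun φ =>
    ¬ (p 1 φ).card ≤ n / 3 ∧ (p 2 φ).card ≤ n / 3
  let s3 : Finset (Fin n → Fin 4) := univ.filter fun φ =>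
    ¬ (p 1 φ).card ≤ n / 3 ∧ ¬ (p 2 φ).card ≤ n / 3
  have hsplit : ∀ f : (Fin n → Fin 4) → ℚ,
      ∑ φ, f φ = ∑ φ ∈ s1, f φ + ∑ φ ∈ s2, f φ + ∑ φ ∈ s3, f φ := by
    intro f
    rw [← Finset.sum_filter_add_sum_filter_not univ (fun φ => (p 1 φ).card ≤ n / 3),
      ← Finset.sum_filter_add_sum_filter_not (univ.filter fun φ => ¬ (p 1 φ).card ≤ n / 3)
        (fun φ => (p 2 φ).card ≤ n / 3), Finset.filter_filter, Finset.filter_filter, add_assoc]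
  have hs1 : ∀ φ ∈ s1, (p 1 φ).card ≤ n / 3 := fun φ hφ => (mem_filter.1 hφ).2
  have hs2 : ∀ φ ∈ s2, (p 2 φ).card ≤ n / 3 := fun φ hφ => (mem_filter.1 hφ).2.2
  have hs3 : ∀ φ ∈ s3, (p 3 φ).card ≤ n / 3 := fun φ hφ => by
    have h1 := (mem_filter.1 hφ).2
    have h2 := hsum φ
    omega
  refine slice_rank_diag (ι := {A : Finset (Fin n) // A.card ≤ n / 3})
    (fun a x => m a x) (fun a x => m a x) (fun a x => m a x)
    (fun a y z => ∑ φ ∈ s1 with p 1 φ = a, 2 ^ (p 0 φ).card * m (p 2 φ) y * m (p 3 φ) z)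
    (fun a x z => ∑ φ ∈ s2 with p 2 φ = a, 2 ^ (p 0 φ).card * m (p 1 φ) x * m (p 3 φ) z)
    (fun a x y => ∑ φ ∈ s3 with p 3 φ = a, 2 ^ (p 0 φ).card * m (p 1 φ) x * m (p 2 φ) y)
    (fun x => ∏ i, (2 + v x i + v x i + v x i)) ?_ ?_
  · intro x
    refine Finset.prod_ne_zero_iff.2 fun i _ => ?_
    simp only [v]
    split_ifs <;> norm_num
  intro x y z
  have hT : ∏ i, (2 + v x i + v y i + v z i) = ∑ φ : Fin n → Fin 4, ∏ i, e x y z i (φ i) := by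
    rw [← Fintype.piFinset_univ, ← Finset.prod_univ_sum]
    refine Finset.prod_congr rfl fun i _ => ?_
    rw [Fin.sum_univ_four]; rfl
  rw [← group_terms s1 (p 1) (n / 3) hs1 (fun A => m A x)
      (fun φ => 2 ^ (p 0 φ).card * m (p 2 φ) y * m (p 3 φ) z),
    ← group_terms s2 (p 2) (n / 3) hs2 (fun A => m A y)
      (fun φ => 2 ^ (p 0 φ).card * m (p 1 φ) x * m (p 3 φ) z),
    ← group_terms s3 (p 3) (n / 3) hs3 (fun A => m A z)
      (fun φ => 2 ^ (p 0 φ).card * m (p 1 φ) x * m (p 2 φ) y)]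
  trans ∏ i, (2 + v x i + v y i + v z i)
  · rw [hT, hsplit]
    simp_rw [hterm]
    congr 1
    · congr 1
      · exact Finset.sum_congr rfl fun φ _ => by ring
      · exact Finset.sum_congr rfl fun φ _ => by ring
    · exact Finset.sum_congr rfl fun φ _ => by ring
  split_ifs with hxyz
  · rw [hxyz.1, hxyz.2]
  -- distinct sets of equal size
  have hdiff : ∀ A B : F, A ≠ B → ∃ i, i ∈ (A : Finset (Fin n)) ∧ i ∉ (B : Finset (Fin n)) := by
    intro A B hAB
    by_contra! hc
    exact hAB (Subtype.ext (Finset.eq_of_subset_of_card_le hc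
      (by rw [hl _ A.2, hl _ B.2])))
  suffices hi : ∃ i, 2 + v x i + v y i + v z i = 0 by
    obtain ⟨i, hi⟩ := hi
    exact Finset.prod_eq_zero (mem_univ i) hi
  by_cases hxy : x = y
  · subst hxy
    obtain ⟨i, h1, h2⟩ := hdiff x z (fun h => hxyz ⟨h, h⟩)
    exact ⟨i, by simp [v, h1, h2]; norm_num⟩
  by_cases hxz : x = z
  · subst hxz
    obtain ⟨i, h1, h2⟩ := hdiff x y hxy
    exact ⟨i, by simp [v, h1, h2]; norm_num⟩
  by_cases hyz : y = z
  · subst hyz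
    obtain ⟨i, h1, h2⟩ := hdiff y x (Ne.symm hxy)
    exact ⟨i, by simp [v, h1, h2]; norm_num⟩
  by_contra! hc
  refine hF ⟨x, x.2, y, y.2, z, z.2, fun h => hxy (Subtype.ext h), fun h => hxz (Subtype.ext h),
    fun h => hyz (Subtype.ext h), ?_, ?_, ?_⟩ <;>
  · ext i
    have := hc i
    by_cases h1 : i ∈ (x : Finset (Fin n)) <;> by_cases h2 : i ∈ (y : Finset (Fin n)) <;>
      by_cases h3 : i ∈ (z : Finset (Fin n)) <;> simp [v, h1, h2, h3] at this ⊢ <;>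
      norm_num at this

theorem naslund_sawin_set_bound (n : ℕ) (F : Finset (Finset (Fin n)))
    (hF : SunflowerFree F) :
    F.card ≤ 3 * (n + 1) * ∑ i ∈ Finset.range (n / 3 + 1), n.choose i := by
  have h := Finset.card_eq_sum_card_fiberwise (s := F) (t := Finset.range (n + 1))
    (f := Finset.card) (by
      intro A _
      have := Finset.card_le_univ A
      simp at this ⊢
      omega)
  rw [h]
  calc _ ≤ ∑ l ∈ Finset.range (n + 1), 3 * ∑ i ∈ Finset.range (n / 3 + 1), n.choose i := by
        refine Finset.sum_le_sum fun l _ => layer_bound n _ ?_ l ?_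
        · rintro ⟨A, hA, B, hB, C, hC, hr⟩
          exact hF ⟨A, (Finset.mem_filter.1 hA).1, B, (Finset.mem_filter.1 hB).1, C,
            (Finset.mem_filter.1 hC).1, hr⟩
        · exact fun A hA => (Finset.mem_filter.1 hA).2
    _ = _ := by
        rw [Finset.sum_const, Finset.card_range, smul_eq_mul]
        ring
end

section
/- Let k ≥ 1 and t ≥ 2 be integers. If F is a k-uniform set system with |F| > k!·(t−1)^k·(1 − ∑_{s=1}^{k−1} s/((s+1)!·(t−1)^s)), then F contains a sunflower with t petals, i.e. t distinct members F_1,…,F_t with F_i ∩ F_j = ⋂_{s=1}^t F_s for all i ≠ j. -/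
def sfBound (b : ℝ) : ℕ → ℝ
  | 0 => 1
  | k + 1 => b * ((k + 1) * sfBound b k - k)

theorem sfBound_ge (b : ℝ) (hb : 1 ≤ b) (k : ℕ) : 1 ≤ sfBound b k := by
  induction k with
  | zero => simp [sfBound]
  | succ k ih =>
    have : (1 : ℝ) ≤ (k + 1) * sfBound b k - k := by
      have : (0 : ℝ) ≤ k := Nat.cast_nonneg k
      nlinarith
    simp only [sfBound]
    nlinarith

theorem sfBound_eq (b : ℝ) (hb : 1 ≤ b) (k : ℕ) :
    (Nat.factorial (k + 1) : ℝ) * b ^ (k + 1) *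
      (1 - ∑ s ∈ Finset.Icc 1 k, (s : ℝ) / ((Nat.factorial (s + 1) : ℝ) * b ^ s))
      = sfBound b (k + 1) := by
  induction k with
  | zero => simp [sfBound]
  | succ k ih =>
    rw [Finset.sum_Icc_succ_top (by omega), sfBound, ← ih]
    have h1 : b ≠ 0 := by linarith
    have h2 : (Nat.factorial (k + 1) : ℝ) ≠ 0 := by positivity
    have h3 : ((k : ℝ) + 1 + 1) ≠ 0 := by positivity
    generalize ∑ s ∈ Finset.Icc 1 k, (s : ℝ) / ((Nat.factorial (s + 1) : ℝ) * b ^ s) = T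
    rw [Nat.factorial_succ (k + 1)]
    push_cast
    field_simp
    ring

theorem sf_main {α : Type*} [DecidableEq α] (b : ℕ) (hb : 1 ≤ b) (k : ℕ) :
    ∀ F : Finset (Finset α), (∀ A ∈ F, A.card = k) → sfBound b k < F.card →
      ∃ S ⊆ F, S.card = b + 1 ∧ ∃ K, ∀ A ∈ S, ∀ B ∈ S, A ≠ B → A ∩ B = K := by
  induction k with
  | zero =>
    intro F hF hc
    exfalso
    simp only [sfBound] at hc
    have hc : 1 < F.card := by exact_mod_cast hc
    obtain ⟨A, hA, B, hB, hAB⟩ := Finset.one_lt_card.1 hc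
    exact hAB ((Finset.card_eq_zero.1 (hF A hA)).trans (Finset.card_eq_zero.1 (hF B hB)).symm)
  | succ k ih =>
    intro F hF hc
    have hbR : (1 : ℝ) ≤ b := by exact_mod_cast hb
    obtain ⟨M, hM, hmax⟩ := Finset.exists_max_image
      (F.powerset.filter (fun M => ∀ A ∈ M, ∀ B ∈ M, A ≠ B → A ∩ B = ∅)) Finset.card
      ⟨∅, by simp⟩
    simp only [Finset.mem_filter, Finset.mem_powerset] at hM hmax
    obtain ⟨hMF, hMd⟩ := hM
    by_cases hm : b + 1 ≤ M.card
    · obtain ⟨S, hS, hSc⟩ := Finset.exists_subset_card_eq hm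
      exact ⟨S, hS.trans hMF, hSc, ∅, fun A hA B hB => hMd A (hS hA) B (hS hB)⟩
    by_contra hno
    have hdeg : ∀ x, ((F.filter (fun A => x ∈ A)).card : ℝ) ≤ sfBound b k := by
      intro x
      by_contra hx
      push Not at hx
      have hinj : Set.InjOn (fun A : Finset α => A.erase x)
          (F.filter (fun A => x ∈ A) : Finset (Finset α)) := by
        intro A hA B hB hAB
        simp only [Finset.coe_filter, Set.mem_ofPred_eq] at hA hB
        simp only at hAB
        rw [← Finset.insert_erase hA.2, ← Finset.insert_erase hB.2, hAB]
      obtain ⟨S, hS, hSc, K, hK⟩ := ih ((F.filter (fun A => x ∈ A)).image (fun A => A.erase x))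
        (by
          intro A hA
          simp only [Finset.mem_image, Finset.mem_filter] at hA
          obtain ⟨B, ⟨hB, hxB⟩, rfl⟩ := hA
          rw [Finset.card_erase_of_mem hxB, hF B hB]; rfl)
        (by rw [Finset.card_image_of_injOn hinj]; exact hx)
      have hS' : ∀ A ∈ S, x ∉ A ∧ insert x A ∈ F := by
        intro A hA
        have := hS hA
        simp only [Finset.mem_image, Finset.mem_filter] at this
        obtain ⟨B, ⟨hB, hxB⟩, rfl⟩ := this
        simp [Finset.insert_erase hxB, hB]
      apply hno
      refine ⟨S.image (insert x), ?_, ?_, insert x K, ?_⟩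
      · intro A hA
        obtain ⟨B, hB, rfl⟩ := Finset.mem_image.1 hA
        exact (hS' B hB).2
      · rw [Finset.card_image_of_injOn, hSc]
        intro A hA B hB hAB
        rw [← Finset.erase_insert (hS' A hA).1, ← Finset.erase_insert (hS' B hB).1, hAB]
      · intro A hA B hB hAB
        obtain ⟨A, hA2, rfl⟩ := Finset.mem_image.1 hA
        obtain ⟨B, hB2, rfl⟩ := Finset.mem_image.1 hB
        rw [← Finset.insert_inter_distrib, hK A hA2 B hB2 (fun h => hAB (by rw [h]))]
    set U := M.biUnion id with hU
    have hUc : U.card ≤ M.card * (k + 1) :=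
      Finset.card_biUnion_le_card_mul _ _ _ (fun A hA => (hF A (hMF hA)).le)
    have hdc : ∑ x ∈ U, (F.filter (fun A => x ∈ A)).card = ∑ A ∈ F, (U.filter (fun x => x ∈ A)).card :=
      Finset.sum_card_bipartiteAbove_eq_sum_card_bipartiteBelow (fun x A => x ∈ A)
    have hlow : F.card + M.card * k ≤ ∑ A ∈ F, (U.filter (fun x => x ∈ A)).card := by
      have h1 : ∑ A ∈ F, (1 + if A ∈ M then k else 0) = F.card + M.card * k := by
        rw [Finset.sum_add_distrib, Finset.sum_ite_mem, Finset.inter_eq_right.2 hMF]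
        simp
      rw [← h1]
      apply Finset.sum_le_sum
      intro A hA
      split_ifs with hAM
      · rw [add_comm, ← hF A hA]
        apply Finset.card_le_card
        intro x hx
        simp only [Finset.mem_filter, hU, Finset.mem_biUnion, id]
        exact ⟨⟨A, hAM, hx⟩, hx⟩
      · rw [add_zero, Nat.succ_le_iff, Finset.card_pos]
        by_contra hemp
        have hd : ∀ B ∈ M, A ∩ B = ∅ := by
          intro B hB
          by_contra hne
          obtain ⟨x, hx⟩ := Finset.nonempty_iff_ne_empty.2 hne
          rw [Finset.mem_inter] at hx
          apply hemp
          refine ⟨x, ?_⟩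
          simp only [Finset.mem_filter, hU, Finset.mem_biUnion, id]
          exact ⟨⟨B, hB, hx.2⟩, hx.1⟩
        have := hmax (insert A M) ⟨Finset.insert_subset hA hMF, by
          intro B hB C hC hBC
          rw [Finset.mem_insert] at hB hC
          rcases hB with rfl | hB <;> rcases hC with rfl | hC
          · exact absurd rfl hBC
          · exact hd _ hC
          · rw [Finset.inter_comm]; exact hd _ hB
          · exact hMd _ hB _ hC hBC⟩
        rw [Finset.card_insert_of_notMem hAM] at this
        omega
    have hup : (∑ x ∈ U, ((F.filter (fun A => x ∈ A)).card : ℝ)) ≤ U.card * sfBound b k := by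
      have := Finset.sum_le_card_nsmul U _ _ (fun x _ => hdeg x)
      simpa using this
    rw [← hdc] at hlow
    have hlow' : (F.card : ℝ) + M.card * k ≤ ∑ x ∈ U, ((F.filter (fun A => x ∈ A)).card : ℝ) := by
      exact_mod_cast hlow
    have hUc' : (U.card : ℝ) ≤ M.card * (k + 1) := by exact_mod_cast hUc
    have hmb : (M.card : ℝ) ≤ b := by
      have : M.card ≤ b := by omega
      exact_mod_cast this
    have hge := sfBound_ge b hbR k
    have h1 : (U.card : ℝ) * sfBound b k ≤ M.card * (k + 1) * sfBound b k :=
      mul_le_mul_of_nonneg_right hUc' (by linarith)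
    have h0 : (0 : ℝ) ≤ (k + 1) * sfBound b k - k := by
      have : (0 : ℝ) ≤ k := Nat.cast_nonneg k
      nlinarith
    have h2 := mul_le_mul_of_nonneg_right hmb h0
    simp only [sfBound] at hc
    nlinarith


theorem erdos_rado_sunflower {α : Type*} [DecidableEq α] (k t : ℕ)
    (hk : 1 ≤ k) (ht : 2 ≤ t) (F : Finset (Finset α))
    (huniform : ∀ A ∈ F, A.card = k)
    (hcard : (Nat.factorial k : ℝ) * ((t : ℝ) - 1) ^ k *
        (1 - ∑ s ∈ Finset.Icc 1 (k - 1),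
          (s : ℝ) / ((Nat.factorial (s + 1) : ℝ) * ((t : ℝ) - 1) ^ s))
      < (F.card : ℝ)) :
    ∃ S ⊆ F, S.card = t ∧ ∃ hS : S.Nonempty,
      ∀ A ∈ S, ∀ B ∈ S, A ≠ B → A ∩ B = S.inf' hS id := by
  obtain ⟨b, rfl⟩ : ∃ b, t = b + 1 := ⟨t - 1, by omega⟩
  obtain ⟨k, rfl⟩ : ∃ j, k = j + 1 := ⟨k - 1, by omega⟩
  have hb : 1 ≤ b := by omega
  have e : ((b + 1 : ℕ) : ℝ) - 1 = b := by push_cast; ring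
  rw [e, Nat.add_sub_cancel, sfBound_eq (b : ℝ) (by exact_mod_cast hb) k] at hcard
  obtain ⟨S, hSF, hSc, K, hK⟩ := sf_main b hb (k + 1) F huniform hcard
  have hS : S.Nonempty := Finset.card_pos.1 (by omega)
  refine ⟨S, hSF, hSc, hS, fun A hA B hB hAB => ?_⟩
  apply le_antisymm
  · apply Finset.le_inf'
    intro C hC
    obtain ⟨D, hD, hDC⟩ := Finset.exists_mem_ne (by omega : 1 < S.card) C
    rw [hK A hA B hB hAB, ← hK C hC D hD hDC.symm]
    exact Finset.inter_subset_left
  · exact Finset.subset_inter (Finset.inf'_le id hA) (Finset.inf'_le id hB)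
end

section
/- Let k ≥ 1 be an integer and x ≥ 2 a real number. Then ∑_{j=0}^{⌊2k/3⌋} C(k, j)·x^j ≤ (⌈2k/3⌉ + 1)·(3/2^{2/3})^k·x^{⌈2k/3⌉}, where C(k, j) is the binomial coefficient. -/
theorem binomial_sum_le_closed_form (k : ℕ) (hk : 1 ≤ k) (x : ℝ) (hx : 2 ≤ x) :
    ∑ j ∈ Finset.range (2 * k / 3 + 1), (k.choose j : ℝ) * x ^ j ≤
      ((⌈(2 * k : ℚ) / 3⌉₊ : ℝ) + 1) * (3 / 2 ^ ((2 : ℝ) / 3)) ^ k *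
        x ^ ⌈(2 * k : ℚ) / 3⌉₊ := by
  have hc : (2 * k : ℚ) / 3 ≤ (⌈(2 * k : ℚ) / 3⌉₊ : ℚ) := Nat.le_ceil _
  generalize ⌈(2 * k : ℚ) / 3⌉₊ = c at hc ⊢
  have hc' : 2 * k ≤ 3 * c := by
    have : (2 * k : ℚ) ≤ 3 * c := by linarith
    exact_mod_cast this
  have hcR : (2 : ℝ) / 3 * k ≤ c := by
    have : (2 * k : ℝ) ≤ 3 * c := by exact_mod_cast hc'
    linarith
  have hA0 : (0 : ℝ) ≤ (3 / 2 ^ ((2 : ℝ) / 3)) ^ k := by positivity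
  have hA : (3 : ℝ) ^ k ≤ (3 / 2 ^ ((2 : ℝ) / 3)) ^ k * 2 ^ c := by
    rw [div_pow, ← Real.rpow_mul_natCast (by norm_num), div_mul_eq_mul_div, le_div_iff₀ (by positivity)]
    gcongr
    rw [← Real.rpow_natCast 2 c]
    exact Real.rpow_le_rpow_of_exponent_le (by norm_num) hcR
  generalize ((3 : ℝ) / 2 ^ ((2 : ℝ) / 3)) ^ k = A at hA0 hA ⊢
  have key : ∀ j ∈ Finset.range (2 * k / 3 + 1), (k.choose j : ℝ) * x ^ j ≤ A * x ^ c := by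
    intro j hj
    rw [Finset.mem_range] at hj
    have hjc : j ≤ c := by omega
    have hjk : j ≤ k := by omega
    obtain ⟨d, rfl⟩ := Nat.exists_eq_add_of_le hjc
    have h1 : (k.choose j : ℝ) * 2 ^ j ≤ 3 ^ k := by
      have h := add_pow (2 : ℝ) 1 k
      have h2 := Finset.single_le_sum (f := fun m => (2 : ℝ) ^ m * 1 ^ (k - m) * (k.choose m : ℝ))
        (s := Finset.range (k + 1)) (fun i _ => by positivity) (Finset.mem_range.2 (by omega : j < k + 1))
      rw [← h] at h2
      norm_num at h2
      linarith
    have h3 : (k.choose j : ℝ) ≤ A * 2 ^ d := by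
      have : (k.choose j : ℝ) * 2 ^ j ≤ (A * 2 ^ d) * 2 ^ j := by
        rw [pow_add] at hA
        linarith
      exact le_of_mul_le_mul_right this (by positivity)
    have h4 : A * 2 ^ d ≤ A * x ^ d := by gcongr
    have hx0 : 0 ≤ x ^ j := by positivity
    calc (k.choose j : ℝ) * x ^ j ≤ (A * x ^ d) * x ^ j := by
          gcongr
          exact h3.trans h4
      _ = A * x ^ (j + d) := by ring
  refine (Finset.sum_le_card_nsmul _ _ _ key).trans ?_
  rw [Finset.card_range, nsmul_eq_mul, mul_assoc]
  have : ((2 * k / 3 + 1 : ℕ) : ℝ) ≤ (c : ℝ) + 1 := by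
    exact_mod_cast (by omega : 2 * k / 3 + 1 ≤ c + 1)
  have hx0 : 0 ≤ x ^ c := by positivity
  gcongr
end
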